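/- Let m ≥ n ≥ 1, let A ∈ ℂ^{m×n} be column-orthonormal, and set K = AAᴴ. Then for every subset S ⊆ [m] with |S| = k ≤ n, the marginal probability that the modes in S are all occupied equals det(K_S); that is, Σ_{T : S ⊆ T ⊆ [m], |T| = n} det(K_T) = det(K_S). -/

import Mathlib

open Matrix

/-- The principal submatrix of an `m × m` matrix with rows and columns indexed by
a subset `S ⊆ [m]` with `|S| = k`. -/
noncomputable def principalSubmatrix {m k : ℕ} (K : Matrix (Fin m) (Fin m) ℂ)
    (S : Finset (Fin m)) (hS : S.card = k) : Matrix (Fin k) (Fin k) ℂ :=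
  K.submatrix (fun i => ((S.orderIsoOfFin hS i : {x // x ∈ S}) : Fin m))
    (fun i => ((S.orderIsoOfFin hS i : {x // x ∈ S}) : Fin m))

/-!
Put `K = A * B` where `B * A = 1`, and let `D` be the diagonal matrix of weights `w i`. Then
`B * (1 + D) * A = 1 + B * (D * A)` has the same determinant as `1 + D * K`. Expanding the former
by Cauchy–Binet and the latter by principal minors gives
`∑ |T| = n, (∏ i ∈ T, (1 + w i)) * det K_T = ∑ U, (∏ i ∈ U, w i) * det K_U`.
After expanding the products on the left, both sides are multi-affine in `w`, and the marginal
formula is the equality of their coefficients at `∏ i ∈ S, w i`. Over any commutative ring, these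
coefficients are determined by the values at weights in `{0, 1}`.
-/

section MultiAffine

open Finset

variable {ι R : Type*}

theorem eq_of_forall_sum_powerset_eq [AddCancelCommMonoid R] {f g : Finset ι → R}
    (h : ∀ s : Finset ι, ∑ u ∈ s.powerset, f u = ∑ u ∈ s.powerset, g u) : f = g := by
  classical
  funext s
  induction s using Finset.strongInduction with
  | H s ih =>
    have proper_subsets : ∑ u ∈ s.ssubsets, f u = ∑ u ∈ s.ssubsets, g u :=
      sum_congr rfl fun u hu => ih u (mem_ssubsets.mp hu)
    have all_subsets := h s
    rwa [← insert_erase (mem_powerset_self s), sum_insert (notMem_erase _ _),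
      sum_insert (notMem_erase _ _), ← ssubsets, proper_subsets, add_left_inj] at all_subsets

theorem eq_of_forall_sum_prod_mul_eq [Fintype ι] [CommRing R] {f g : Finset ι → R}
    (h : ∀ w : ι → R, ∑ u, (∏ i ∈ u, w i) * f u = ∑ u, (∏ i ∈ u, w i) * g u) : f = g := by
  classical
  have eval_indicator (c : Finset ι → R) (s : Finset ι) :
      ∑ u, (∏ i ∈ u, if i ∈ s then 1 else 0) * c u = ∑ u ∈ s.powerset, c u := by
    simp only [prod_ite_zero, prod_const_one, ite_mul, one_mul, zero_mul, ← subset_iff,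
      ← sum_filter, ← mem_powerset, filter_univ_mem]
  refine eq_of_forall_sum_powerset_eq fun s => ?_
  rw [← eval_indicator, ← eval_indicator, h]

theorem sum_prod_mul_sum_superset [Fintype ι] [DecidableEq ι] [CommSemiring R] (w : ι → R)
    (f : Finset ι → R) (𝒯 : Finset (Finset ι)) :
    ∑ u, (∏ i ∈ u, w i) * ∑ t ∈ 𝒯 with u ⊆ t, f t = ∑ t ∈ 𝒯, (∏ i ∈ t, (1 + w i)) * f t := by
  simp only [prod_one_add, mul_sum, sum_mul]
  exact sum_comm' fun u t => by simp [and_comm]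

end MultiAffine

section PrincipalMinor

open Finset Polynomial

variable {m n R : Type*} [DecidableEq m] [CommRing R]

/-- The principal minor `det M_s`. The rows and columns are indexed by the subtype of `s`, so
that no enumeration of `s` has to be chosen. -/
def principalMinor (M : Matrix m m R) (s : Finset m) : R :=
  (M.submatrix (Subtype.val : s → m) Subtype.val).det

variable [Fintype m] [Fintype n] [DecidableEq n]

theorem principalMinor_diagonal_mul (w : m → R) (M : Matrix m m R) (s : Finset m) :
    principalMinor (diagonal w * M) s = (∏ i ∈ s, w i) * principalMinor M s := by
  have scaled_rows : (diagonal w * M).submatrix (Subtype.val : s → m) Subtype.val =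
      of fun (i j : s) => w i * M.submatrix (Subtype.val : s → m) Subtype.val i j := by
    ext i j
    simp only [submatrix_apply, diagonal_mul, of_apply]
  rw [principalMinor, scaled_rows, det_mul_column, prod_coe_sort, principalMinor]

theorem det_one_add_eq_sum_principalMinor (M : Matrix m m R) :
    (1 + M).det = ∑ s, principalMinor M s := by
  have eval_eq : ((1 + (X : R[X]) • M.map C).det).eval 1 = (1 + M).det := by
    simp [eval_det]
  have degree_le : ((1 + (X : R[X]) • M.map C).det).natDegree ≤ Fintype.card m := by
    simpa [add_comm] using natDegree_det_X_add_C_le M 1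
  rw [← eval_eq, eval_eq_sum_range' (Nat.lt_succ_of_le degree_le), ← powerset_univ, sum_powerset]
  simp only [one_pow, mul_one, coeff_det_one_add_X_smul_eq_sum_minors, principalMinor, card_univ]

/-- This is the Cauchy–Binet formula: the principal minor of `A * B` at `s` is the product of the
maximal minors of `A` and `B` at `s`. -/
theorem sum_principalMinor_mul_eq_det_mul (A : Matrix m n R) (B : Matrix n m R) :
    ∑ s ∈ univ.powersetCard (Fintype.card n), principalMinor (A * B) s = (B * A).det := by
  calc
    _ = (1 + (X : R[X]) • (A * B).map C).det.coeff (Fintype.card n) :=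
      (coeff_det_one_add_X_smul_eq_sum_minors (A * B) _).symm
    _ = ((X : R[X]) • (B * A).map C + (1 : Matrix n n R).map C).det.coeff (Fintype.card n) := by
      rw [Matrix.map_mul, ← Matrix.smul_mul, det_one_add_mul_comm, Matrix.mul_smul,
        ← Matrix.map_mul, add_comm, Matrix.map_one C C_0 C_1]
    _ = (B * A).det := coeff_det_X_add_C_card (B * A) 1

theorem sum_prod_one_add_mul_principalMinor {A : Matrix m n R} {B : Matrix n m R}
    (hBA : B * A = 1) (w : m → R) :
    ∑ t ∈ univ.powersetCard (Fintype.card n), (∏ i ∈ t, (1 + w i)) * principalMinor (A * B) t =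
      ∑ u, (∏ i ∈ u, w i) * principalMinor (A * B) u := by
  calc
    _ = ∑ t ∈ univ.powersetCard (Fintype.card n),
          principalMinor (diagonal (fun i => 1 + w i) * A * B) t := by
      simp only [Matrix.mul_assoc, principalMinor_diagonal_mul]
    _ = (B * (diagonal (fun i => 1 + w i) * A)).det := sum_principalMinor_mul_eq_det_mul _ _
    _ = (1 + B * (diagonal w * A)).det := by
      rw [← diagonal_add, diagonal_one, Matrix.add_mul, Matrix.one_mul, Matrix.mul_add, hBA]
    _ = (1 + diagonal w * (A * B)).det := by
      rw [det_one_add_mul_comm, Matrix.mul_assoc]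
    _ = _ := by
      simp only [det_one_add_eq_sum_principalMinor, principalMinor_diagonal_mul]

theorem stmt10_general {A : Matrix m n R} {B : Matrix n m R} (hBA : B * A = 1) (S : Finset m) :
    ∑ T : {T : Finset m // S ⊆ T ∧ T.card = Fintype.card n}, principalMinor (A * B) T.1 =
      principalMinor (A * B) S := by
  have marginal_eq :
      (fun U => ∑ T ∈ univ.powersetCard (Fintype.card n) with U ⊆ T, principalMinor (A * B) T) =
        principalMinor (A * B) :=
    eq_of_forall_sum_prod_mul_eq fun w => (sum_prod_mul_sum_superset w _ _).trans
      (sum_prod_one_add_mul_principalMinor hBA w)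
  rw [← congrFun marginal_eq S]
  exact (sum_subtype _ (by simp [and_comm]) _).symm

end PrincipalMinor

theorem det_principalSubmatrix {m k : ℕ} (K : Matrix (Fin m) (Fin m) ℂ)
    (S : Finset (Fin m)) (hS : S.card = k) :
    (principalSubmatrix K S hS).det = principalMinor K S :=
  det_submatrix_equiv_self (S.orderIsoOfFin hS).toEquiv (K.submatrix Subtype.val Subtype.val)

theorem stmt10 (m n k : ℕ) (hn : 1 ≤ n) (hmn : n ≤ m) (hk : k ≤ n)
    (A : Matrix (Fin m) (Fin n) ℂ) (hA : Aᴴ * A = 1)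
    (S : Finset (Fin m)) (hS : S.card = k) :
    ∑ T : {T : Finset (Fin m) // S ⊆ T ∧ T.card = n},
        (principalSubmatrix (A * Aᴴ) T.1 T.2.2).det
      = (principalSubmatrix (A * Aᴴ) S hS).det := by
  have marginal := stmt10_general hA S
  rw [Fintype.card_fin] at marginal
  simpa only [det_principalSubmatrix] using marginal
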